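/- There is a constant c > 0 such that for any pair (Γ_i, L_j), any even integer k ≥ 4, and any 0 < δ < 1, with probability at least 1 − δ over a training set S ∼ D^n: sup over w ∈ H(Γ_i, L_j) of | E_{A,t}[ L_{A·D}^{γ_i/2}(h_{A,t}(w)) − L_{A·S}^{γ_i/2}(h_{A,t}(w)) ] | is at most c·( sqrt( (ℓ_{j+1} + exp(−γ_{i+1}²k/c))·(k + ln(e/δ))/n ) + (k + ln(e/δ))/n ). -/

import Mathlib

open MeasureTheory ProbabilityTheory

noncomputable section

/-- Dot product on `Fin m → ℝ`. -/
def dotp {m : ℕ} (w x : Fin m → ℝ) : ℝ := ∑ j, w j * x j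

/-- Margin loss `L_D^γ(w)` of `w` under a distribution `D` on `ℝ^m × ℝ`
(labels are encoded as reals in `{-1,1}`). -/
def lossD {m : ℕ} (D : Measure ((Fin m → ℝ) × ℝ)) (γ : ℝ) (w : Fin m → ℝ) : ℝ :=
  (D {p | p.2 * dotp w p.1 ≤ γ}).toReal

/-- Empirical margin loss `L_S^γ(w)` on a training set `S` of `n` labeled points. -/
def lossS {m n : ℕ} (S : Fin n → (Fin m → ℝ) × ℝ) (γ : ℝ) (w : Fin m → ℝ) : ℝ :=
  (Nat.card {i : Fin n // (S i).2 * dotp w (S i).1 ≤ γ} : ℝ) / n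

/-- The i.i.d. sample measure `D^n` over training sets of size `n`. -/
def trainM {m : ℕ} (D : Measure ((Fin m → ℝ) × ℝ)) (n : ℕ) :
    Measure (Fin n → (Fin m → ℝ) × ℝ) := Measure.pi fun _ => D

/-- Spacing of the rounding grid: `(10 √k)⁻¹`. -/
def gridStep (k : ℕ) : ℝ := (10 * Real.sqrt k)⁻¹

/-- The largest grid point `(1/2)(10√k)⁻¹ + z(10√k)⁻¹ ≤ g`. -/
def roundDown (k : ℕ) (g : ℝ) : ℝ :=
  gridStep k / 2 + (⌊(g - gridStep k / 2) / gridStep k⌋ : ℝ) * gridStep k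

/-- The probability `p(z)` of rounding `g` down, chosen so the rounding is unbiased. -/
def roundProb (k : ℕ) (g : ℝ) : ℝ := 1 - (g - roundDown k g) / gridStep k

/-- Matrix-vector product, `(Aw)_i = ∑ j A i j * w j`. -/
def matVec {k m : ℕ} (A : Fin k → Fin m → ℝ) (w : Fin m → ℝ) : Fin k → ℝ :=
  fun i => ∑ j, A i j * w j

/-- The randomized rounding `h_{A,t}(w)` of `Aw` to the grid. -/
def hRound {k m : ℕ} (A : Fin k → Fin m → ℝ) (t : Fin k → ℝ) (w : Fin m → ℝ) :
    Fin k → ℝ :=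
  fun i => if t i ≤ roundProb k (matVec A w i)
    then roundDown k (matVec A w i)
    else roundDown k (matVec A w i) + gridStep k

/-- The joint law of `(A, t)`: `A` has i.i.d. `N(0,1/k)` entries and `t` has i.i.d.
uniform `[0,1]` coordinates, independent of `A`. -/
def roundMeasure (k m : ℕ) : Measure ((Fin k → Fin m → ℝ) × (Fin k → ℝ)) :=
  (Measure.pi fun _ : Fin k => Measure.pi fun _ : Fin m =>
      gaussianReal 0 (k : NNReal)⁻¹).prod
    (Measure.pi fun _ : Fin k => volume.restrict (Set.Icc (0 : ℝ) 1))

/-- Reduced setup: the data domain `X ⊆ S^d ⊂ ℝ^{d+1}` of unit vectors whose first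
`d` coordinates have norm at most `cγ`. -/
def Xset (d : ℕ) (cγ : ℝ) : Set (Fin (d+1) → ℝ) :=
  {x | (∑ j, x j ^ 2) = 1 ∧ (∑ j : Fin d, x j.castSucc ^ 2) ≤ cγ ^ 2}

/-- Reduced setup: the hypothesis class `H = S^{d-1} × {0} ⊂ ℝ^{d+1}`. -/
def Hset (d : ℕ) : Set (Fin (d+1) → ℝ) :=
  {w | (∑ j, w j ^ 2) = 1 ∧ w (Fin.last d) = 0}

/-- `γ_i = 2^{i-1} n^{-1/2}`. -/
def γlo (n i : ℕ) : ℝ := 2 ^ (i - 1) / Real.sqrt n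

/-- `γ_{i+1} = 2^i n^{-1/2}`. -/
def γhi (n i : ℕ) : ℝ := 2 ^ i / Real.sqrt n

/-- `ℓ_{j+1} = 2^j n^{-1}`. -/
def ellhi (n j : ℕ) : ℝ := 2 ^ j / n

/-- The interval `L_j`: `L_0 = [0, n⁻¹]`, and `L_j = (2^{j-1}/n, 2^j/n]` for `j ≥ 1`. -/
def Lset (n j : ℕ) : Set ℝ :=
  if j = 0 then Set.Icc 0 (n : ℝ)⁻¹
  else Set.Ioc ((2 : ℝ) ^ (j - 1) / n) ((2 : ℝ) ^ j / n)

/-- Margin loss of `h ∈ ℝ^k` under the pushforward distribution `A·D`. -/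
def kLossD {k m : ℕ} (D : Measure ((Fin m → ℝ) × ℝ)) (γ : ℝ) (h : Fin k → ℝ)
    (A : Fin k → Fin m → ℝ) : ℝ :=
  (D {q | q.2 * (∑ r, h r * ∑ s, A r s * q.1 s) ≤ γ}).toReal

/-- Empirical margin loss of `h ∈ ℝ^k` on the transformed training set `A·S`. -/
def kLossS {k m n : ℕ} (S : Fin n → (Fin m → ℝ) × ℝ) (γ : ℝ) (h : Fin k → ℝ)
    (A : Fin k → Fin m → ℝ) : ℝ :=
  (Nat.card {i : Fin n // (S i).2 * (∑ r, h r * ∑ s, A r s * (S i).1 s) ≤ γ} : ℝ) / n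

/-- Specification of the function `φ` from the paper, for margin parameter `γi`:
on `[-cγ, 0]` it equals the probability (over the randomized rounding) that the rounded
margin exceeds `γi/2` given original margin `α`; on `(0, γi]` it interpolates linearly to
`0`; on `(γi, cγ]` it is `0`. -/
def phiSpec (d k : ℕ) (cγ γi : ℝ) (φ : ℝ → ℝ) : Prop :=
  (∀ (w x : Fin (d+1) → ℝ) (y : ℝ), w ∈ Hset d → x ∈ Xset d cγ →
      (y = 1 ∨ y = -1) → y * dotp w x ≤ 0 →
      φ (y * dotp w x) =
        (roundMeasure k (d+1)
          {p | γi / 2 < y * ∑ r, hRound p.1 p.2 w r * ∑ s, p.1 r s * x s}).toReal) ∧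
  (∀ α : ℝ, 0 < α → α ≤ γi → φ α = ((γi - α) / γi) * φ 0) ∧
  (∀ α : ℝ, γi < α → α ≤ cγ → φ α = 0)

/-- Specification of the function `ρ` from the paper, for margin parameter `γi`. -/
def rhoSpec (d k : ℕ) (cγ γi : ℝ) (ρ : ℝ → ℝ) : Prop :=
  (∀ (w x : Fin (d+1) → ℝ) (y : ℝ), w ∈ Hset d → x ∈ Xset d cγ →
      (y = 1 ∨ y = -1) → γi < y * dotp w x →
      ρ (y * dotp w x) =
        (roundMeasure k (d+1)
          {p | y * ∑ r, hRound p.1 p.2 w r * ∑ s, p.1 r s * x s ≤ γi / 2}).toReal) ∧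
  (∀ α : ℝ, 0 < α → α ≤ γi →
      ∀ (w x : Fin (d+1) → ℝ) (y : ℝ), w ∈ Hset d → x ∈ Xset d cγ →
      (y = 1 ∨ y = -1) → y * dotp w x = γi →
      ρ α = (α / γi) *
        (roundMeasure k (d+1)
          {p | y * ∑ r, hRound p.1 p.2 w r * ∑ s, p.1 r s * x s ≤ γi / 2}).toReal) ∧
  (∀ α : ℝ, -cγ ≤ α → α ≤ 0 → ρ α = 0)

/-!
The proof is a PAC-Bayes argument. The rounded hypothesis is recorded by the pair formed by `A` and
the integer index `z` of the grid point to which `A w` is rounded. The prior on such pairs does not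
depend on `w`: a Gaussian matrix and, independently, an index of weight `exp (-∑ |z r|)`. Since
`|z r| ≤ 5 k ⟨A r, w⟩ ^ 2 + 8` and `⟨A r, w⟩` has variance `1 / k`, replacing the law of the pair by
the prior costs only `O(k)` in the exponent on average.

For a fixed pair, Chernoff's bound gives an exponential moment of the empirical loss with mean at
most `1` over the sample; by Fubini the same holds averaged over the prior, whose total mass is
`exp (O(k))`. Markov's inequality for this single random variable, followed by Jensen's inequality
under the law of the pair, controls the averaged deviation for all `w` simultaneously by
`l * (averaged loss) + O(k + log (e / δ)) / (l * n)`, and it remains to choose `l`.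

The averaged loss of the rounding at margin `γ / 2` exceeds the loss of `w` at margin `3 / 4 * γ` by
at most `exp (-γ ^ 2 * k / 100)`: the rounding is unbiased with bounded errors, so Hoeffding's lemma
reduces the exponential moment of its margin to that of a quadratic form in Gaussian variables.
-/

theorem ofReal_exp_add (a b : ℝ) :
    ENNReal.ofReal (Real.exp (a + b)) =
      ENNReal.ofReal (Real.exp a) * ENNReal.ofReal (Real.exp b) := by
  rw [Real.exp_add, ENNReal.ofReal_mul (Real.exp_pos a).le]

theorem ofReal_exp_sum {ι : Type*} (s : Finset ι) (f : ι → ℝ) :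
    ENNReal.ofReal (Real.exp (∑ i ∈ s, f i)) = ∏ i ∈ s, ENNReal.ofReal (Real.exp (f i)) := by
  rw [Real.exp_sum, ENNReal.ofReal_prod_of_nonneg fun _ _ => (Real.exp_pos _).le]

theorem lintegral_exp_sum_pi {ι : Type*} [Fintype ι] {E : ι → Type*}
    [∀ i, MeasurableSpace (E i)] (μ : ∀ i, Measure (E i)) [∀ i, IsProbabilityMeasure (μ i)]
    {f : ∀ i, E i → ℝ} (hf : ∀ i, Measurable (f i)) :
    ∫⁻ x, ENNReal.ofReal (Real.exp (∑ i, f i (x i))) ∂Measure.pi μ =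
      ∏ i, ∫⁻ y, ENNReal.ofReal (Real.exp (f i y)) ∂μ i := by
  have hexp : ∀ i, Measurable fun y => ENNReal.ofReal (Real.exp (f i y)) :=
    fun i => (hf i).exp.ennreal_ofReal
  simp_rw [ofReal_exp_sum]
  rw [lintegral_prod_eq_prod_lintegral_of_indepFun Finset.univ _
    (iIndepFun_pi fun i => (hexp i).aemeasurable) fun i => (hexp i).comp (measurable_pi_apply i)]
  exact Finset.prod_congr rfl fun i _ => (measurePreserving_eval μ i).lintegral_comp (hexp i)

theorem measure_le_le_exp_mul_lintegral_exp {Ω : Type*} [MeasurableSpace Ω] (μ : Measure Ω)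
    {X : Ω → ℝ} (hX : Measurable X) {s : ℝ} (hs : 0 ≤ s) (c : ℝ) :
    μ {ω | X ω ≤ c} ≤
      ENNReal.ofReal (Real.exp (s * c)) * ∫⁻ ω, ENNReal.ofReal (Real.exp (-s * X ω)) ∂μ := by
  rw [← lintegral_const_mul _ (by fun_prop)]
  simp_rw [← ofReal_exp_add]
  have hsub : {ω | X ω ≤ c} ⊆ {ω | 1 ≤ ENNReal.ofReal (Real.exp (s * c + -s * X ω))} := by
    intro ω hω
    have : s * X ω ≤ s * c := mul_le_mul_of_nonneg_left hω hs
    exact ENNReal.one_le_ofReal.2 (Real.one_le_exp (by linarith))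
  refine (measure_mono hsub).trans ?_
  simpa only [one_mul] using mul_meas_ge_le_lintegral (by fun_prop) 1

theorem ofReal_one_sub_le_measure_le_div {Ω : Type*} [MeasurableSpace Ω] (μ : Measure Ω)
    [IsProbabilityMeasure μ] {f : Ω → ENNReal} (hf : Measurable f) {a δ : ℝ} (ha : 0 < a)
    (hδ : 0 < δ) (hfa : ∫⁻ ω, f ω ∂μ ≤ ENNReal.ofReal a) :
    ENNReal.ofReal (1 - δ) ≤ μ {ω | f ω ≤ ENNReal.ofReal (a / δ)} := by
  have hmeas : MeasurableSet {ω | f ω ≤ ENNReal.ofReal (a / δ)} :=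
    measurableSet_le hf measurable_const
  have hcompl : μ {ω | f ω ≤ ENNReal.ofReal (a / δ)}ᶜ ≤ ENNReal.ofReal δ := by
    have hsub : {ω | f ω ≤ ENNReal.ofReal (a / δ)}ᶜ ⊆ {ω | ENNReal.ofReal (a / δ) ≤ f ω} :=
      fun ω hω => (not_le.1 (show ¬ f ω ≤ ENNReal.ofReal (a / δ) from hω)).le
    refine (measure_mono hsub).trans ((meas_ge_le_lintegral_div hf.aemeasurable
      (ENNReal.ofReal_pos.2 (by positivity)).ne' ENNReal.ofReal_ne_top).trans ?_)
    refine ENNReal.div_le_of_le_mul (hfa.trans_eq ?_)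
    rw [← ENNReal.ofReal_mul hδ.le, mul_div_cancel₀ _ hδ.ne']
  rw [ENNReal.ofReal_sub _ hδ.le, ENNReal.ofReal_one, tsub_le_iff_right,
    ← prob_add_prob_compl (μ := μ) hmeas]
  gcongr

theorem integral_le_log_of_lintegral_exp_le {Ω : Type*} [MeasurableSpace Ω] {μ : Measure Ω}
    [IsProbabilityMeasure μ] {f : Ω → ℝ} (hf : Integrable f μ) {R : ℝ} (hR : 0 < R)
    (hle : ∫⁻ ω, ENNReal.ofReal (Real.exp (f ω)) ∂μ ≤ ENNReal.ofReal R) :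
    ∫ ω, f ω ∂μ ≤ Real.log R := by
  have hnonneg : 0 ≤ᵐ[μ] fun ω => Real.exp (f ω) := ae_of_all _ fun _ => (Real.exp_pos _).le
  have hmeas : AEStronglyMeasurable (fun ω => Real.exp (f ω)) μ :=
    Real.continuous_exp.comp_aestronglyMeasurable hf.1
  have hint : Integrable (fun ω => Real.exp (f ω)) μ :=
    (lintegral_ofReal_ne_top_iff_integrable hmeas hnonneg).1
      (hle.trans_lt ENNReal.ofReal_lt_top).ne
  rw [Real.le_log_iff_exp_le hR]
  calc Real.exp (∫ ω, f ω ∂μ)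
      ≤ ∫ ω, Real.exp (f ω) ∂μ :=
        convexOn_exp.map_integral_le Real.continuous_exp.continuousOn isClosed_univ
          (ae_of_all _ fun _ => Set.mem_univ _) hf hint
    _ ≤ R := by
        rw [integral_eq_lintegral_of_nonneg_ae hnonneg hmeas]
        exact ENNReal.toReal_le_of_le_ofReal hR.le hle

theorem lintegral_mul_comp_eq_lintegral_map_withDensity {Ω U : Type*} [MeasurableSpace Ω]
    [MeasurableSpace U] {P : Measure Ω} {g : Ω → ENNReal} (hg : AEMeasurable g P) {Φ : Ω → U}
    (hΦ : Measurable Φ) {f : U → ENNReal} (hf : Measurable f) :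
    ∫⁻ ω, g ω * f (Φ ω) ∂P = ∫⁻ u, f u ∂(P.withDensity g).map Φ := by
  rw [lintegral_map hf hΦ]
  exact (lintegral_withDensity_eq_lintegral_mul₀ hg (hf.comp hΦ).aemeasurable).symm

theorem map_withDensity_le_prod {α β γ : Type*} [MeasurableSpace α] [MeasurableSpace β]
    [MeasurableSpace γ] (μ : Measure α) [SFinite μ] (τ : Measure β) [IsProbabilityMeasure τ]
    (κ : Measure γ) [SFinite κ] {g : α × β → ENNReal} {Z : α × β → γ} (hZ : Measurable Z)
    (hg : ∀ p, g p ≤ κ {Z p}) :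
    ((μ.prod τ).withDensity g).map (fun p => (p.1, Z p)) ≤ μ.prod κ := by
  refine Measure.le_iff.2 fun s hs => ?_
  have hΦ : Measurable fun p : α × β => (p.1, Z p) := by fun_prop
  have hpoint : ∀ p, ((fun p : α × β => (p.1, Z p)) ⁻¹' s).indicator g p ≤
      κ (Prod.mk p.1 ⁻¹' s) := fun p =>
    Set.indicator_le (fun p hp => (hg p).trans (measure_mono (Set.singleton_subset_iff.2 hp))) p
  rw [Measure.map_apply hΦ hs, withDensity_apply _ (hΦ hs), ← lintegral_indicator (hΦ hs),
    Measure.prod_apply hs]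
  exact (lintegral_mono hpoint).trans_eq
    ((measurePreserving_fst (ν := τ)).lintegral_comp (measurable_measure_prodMk_left hs))

theorem abs_sub_le_of_forall_sign {X Y n l K : ℝ} (hn : 0 < n) (hl : 0 < l) (hl1 : l ≤ 1)
    (hX : 0 ≤ X) (h : ∀ θ : ℝ, |θ| = l → n * (θ * Y - (Real.exp θ - 1) * X) ≤ K) :
    |X - Y| ≤ l * X + K / (l * n) := by
  have hquad : ∀ θ : ℝ, |θ| = l → θ * (Y - X) ≤ l ^ 2 * X + K / n := fun θ hθ => by
    have hexp := (abs_le.1 (Real.abs_exp_sub_one_sub_id_le (hθ.trans_le hl1))).2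
    have hbound := (le_div_iff₀' hn).2 (h θ hθ)
    have hmul := mul_le_mul_of_nonneg_right hexp hX
    rw [← sq_abs, hθ] at hmul
    linarith
  have hpos := hquad l (abs_of_pos hl)
  have hneg := hquad (-l) (by rw [abs_neg, abs_of_pos hl])
  have hscaled : l * |X - Y| ≤ l ^ 2 * X + K / n := by
    rw [← abs_of_pos hl, ← abs_mul, abs_of_pos hl]
    exact abs_le'.2 ⟨by linarith, by linarith⟩
  rw [← mul_le_mul_iff_right₀ hl]
  refine hscaled.trans_eq ?_
  field_simp

theorem exists_scale_mul_add_div_le {V B n K : ℝ} (hV : 0 < V) (hB : 0 < B) (hn : 0 < n)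
    (hK : 0 ≤ K) : ∃ l : ℝ, 0 < l ∧ l ≤ 1 ∧
      l * V + K * B / (l * n) ≤ (K + 1) * (√(V * B / n) + B / n) := by
  have hBn : 0 < B / n := by positivity
  set T := √(V * B / n)
  have hT : 0 < T := Real.sqrt_pos.2 (by positivity)
  have hT2 : T ^ 2 = V * B / n := Real.sq_sqrt (by positivity)
  by_cases hsmall : B / n ≤ V
  · have hTV : T ≤ V := (sq_le_sq₀ hT.le hV.le).1 <| by
      rw [hT2, mul_div_assoc, sq]; gcongr
    have hbalance : K * B / (T / V * n) = K * T := by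
      field_simp at hT2 ⊢
      linear_combination -K * hT2
    refine ⟨T / V, by positivity, (div_le_one hV).2 hTV, ?_⟩
    rw [div_mul_cancel₀ _ hV.ne', hbalance]
    nlinarith only [mul_nonneg hK hBn.le, hBn]
  · refine ⟨1, one_pos, le_rfl, ?_⟩
    rw [one_mul, one_mul, mul_div_assoc]
    nlinarith only [mul_nonneg hK hT.le, hT, not_le.1 hsmall]

theorem inv_sqrt_one_add_le_exp {x : ℝ} (hx : 0 ≤ x) :
    (Real.sqrt (1 + x))⁻¹ ≤ Real.exp (-(x / (2 * (1 + x)))) := by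
  rw [← Real.sqrt_inv]
  refine Real.sqrt_le_iff.2 ⟨(Real.exp_pos _).le, ?_⟩
  calc (1 + x)⁻¹ = -(x / (1 + x)) + 1 := by field_simp; ring
    _ ≤ Real.exp (-(x / (1 + x))) := Real.add_one_le_exp _
    _ = Real.exp (-(x / (2 * (1 + x)))) ^ 2 := by
        rw [← Real.exp_nat_mul]; congr 1; push_cast; field_simp

theorem dotProduct_self_nonneg {ι R : Type*} [Fintype ι] [Ring R] [LinearOrder R]
    [IsStrictOrderedRing R] (x : ι → R) : 0 ≤ x ⬝ᵥ x :=
  Finset.sum_nonneg fun j _ => mul_self_nonneg (x j)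

@[fun_prop]
theorem measurable_dotProduct {α ι : Type*} [MeasurableSpace α] [Fintype ι] {f g : α → ι → ℝ}
    (hf : Measurable f) (hg : Measurable g) : Measurable fun a => f a ⬝ᵥ g a := by
  unfold dotProduct; fun_prop

section Gaussian

theorem lintegral_exp_mul_gaussianReal (v : NNReal) (b : ℝ) :
    ∫⁻ y, ENNReal.ofReal (Real.exp (b * y)) ∂gaussianReal 0 v =
      ENNReal.ofReal (Real.exp (v * b ^ 2 / 2)) := by
  rw [← ofReal_integral_eq_lintegral_ofReal (integrable_exp_mul_gaussianReal b)
    (ae_of_all _ fun _ => (Real.exp_pos _).le)]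
  have hmgf := congrFun (mgf_id_gaussianReal (μ := 0) (v := v)) b
  simp only [mgf, id, zero_mul, zero_add] at hmgf
  rw [hmgf]

theorem integral_exp_neg_mul_sq_gaussianReal (v : NNReal) {a : ℝ} (ha : 0 ≤ a) :
    ∫ y, Real.exp (-a * y ^ 2) ∂gaussianReal 0 v = (Real.sqrt (1 + 2 * a * v))⁻¹ := by
  rcases eq_or_ne v 0 with rfl | hv
  · simp
  rw [integral_gaussianReal_eq_integral_smul hv]
  have hdensity : ∀ y : ℝ, gaussianPDFReal 0 v y • Real.exp (-a * y ^ 2) =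
      (Real.sqrt (2 * Real.pi * v))⁻¹ * Real.exp (-(1 / (2 * v) + a) * y ^ 2) := by
    intro y
    rw [gaussianPDFReal, smul_eq_mul, mul_assoc, ← Real.exp_add]
    congr 2; field_simp; ring
  simp_rw [hdensity]
  rw [integral_const_mul, integral_gaussian, ← Real.sqrt_inv, ← Real.sqrt_inv,
    ← Real.sqrt_mul (by positivity)]
  congr 1
  field_simp

theorem lintegral_exp_neg_mul_sq_gaussianReal (v : NNReal) {a : ℝ} (ha : 0 ≤ a) :
    ∫⁻ y, ENNReal.ofReal (Real.exp (-a * y ^ 2)) ∂gaussianReal 0 v =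
      ENNReal.ofReal (Real.sqrt (1 + 2 * a * v))⁻¹ := by
  rw [← integral_exp_neg_mul_sq_gaussianReal v ha, ofReal_integral_eq_lintegral_ofReal _
    (ae_of_all _ fun _ => (Real.exp_pos _).le)]
  refine Integrable.of_bound (by fun_prop) 1 (ae_of_all _ fun y => ?_)
  rw [Real.norm_eq_abs, abs_of_pos (Real.exp_pos _), Real.exp_le_one_iff, neg_mul, neg_nonpos]
  positivity

theorem lintegral_exp_quadratic_prod_gaussianReal (v₁ v₂ : NNReal) {s b : ℝ}
    (hb : s ^ 2 * v₂ / 2 ≤ b) :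
    ∫⁻ q : ℝ × ℝ, ENNReal.ofReal (Real.exp (-s * q.1 * q.2 - b * q.1 ^ 2))
        ∂(gaussianReal 0 v₁).prod (gaussianReal 0 v₂) =
      ENNReal.ofReal (Real.sqrt (1 + 2 * (b - s ^ 2 * v₂ / 2) * v₁))⁻¹ := by
  rw [lintegral_prod _ (by fun_prop), ← lintegral_exp_neg_mul_sq_gaussianReal v₁ (by linarith)]
  refine lintegral_congr fun x => ?_
  simp_rw [sub_eq_neg_add, ofReal_exp_add]
  rw [lintegral_const_mul _ (by fun_prop), lintegral_exp_mul_gaussianReal, ← ofReal_exp_add]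
  congr 2
  ring

/-- The law of a vector with i.i.d. centered Gaussian coordinates of variance `v`. -/
abbrev gaussianPi (ι : Type*) [Fintype ι] (v : NNReal) : Measure (ι → ℝ) :=
  Measure.pi fun _ => gaussianReal 0 v

variable {ι : Type*} [Fintype ι] (v : NNReal)

theorem iIndepFun_gaussianPi : iIndepFun (fun (j : ι) (g : ι → ℝ) => g j) (gaussianPi ι v) :=
  iIndepFun_pi (X := fun _ => id) fun _ => aemeasurable_id

theorem hasLaw_eval_gaussianPi (j : ι) :
    HasLaw (fun g : ι → ℝ => g j) (gaussianReal 0 v) (gaussianPi ι v) :=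
  (measurePreserving_eval (fun _ : ι => gaussianReal 0 v) j).hasLaw

theorem memLp_eval_gaussianPi (j : ι) : MemLp (fun g : ι → ℝ => g j) 2 (gaussianPi ι v) :=
  (hasLaw_eval_gaussianPi v j).hasGaussianLaw.memLp_two

theorem covariance_eval_gaussianPi [DecidableEq ι] (i j : ι) :
    cov[fun g : ι → ℝ => g i, fun g => g j; gaussianPi ι v] = if i = j then (v : ℝ) else 0 := by
  split_ifs with h
  · subst h
    rw [covariance_self (hasLaw_eval_gaussianPi v i).aemeasurable,
      (hasLaw_eval_gaussianPi v i).variance_eq, variance_id_gaussianReal]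
  · exact ((iIndepFun_gaussianPi v).indepFun h).covariance_eq_zero
      (memLp_eval_gaussianPi v i) (memLp_eval_gaussianPi v j)

theorem hasGaussianLaw_dotProduct_prodMk (a b : ι → ℝ) :
    HasGaussianLaw (fun g : ι → ℝ => (g ⬝ᵥ a, g ⬝ᵥ b)) (gaussianPi ι v) := by
  classical
  have hid : HasGaussianLaw (fun (g : ι → ℝ) j => g j) (gaussianPi ι v) :=
    (iIndepFun_gaussianPi v).hasGaussianLaw fun j => (hasLaw_eval_gaussianPi v j).hasGaussianLaw
  let L : (ι → ℝ) →L[ℝ] ℝ × ℝ :=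
    (∑ j, a j • ContinuousLinearMap.proj (R := ℝ) (φ := fun _ : ι => ℝ) j).prod
      (∑ j, b j • ContinuousLinearMap.proj (R := ℝ) (φ := fun _ : ι => ℝ) j)
  have hL : (fun g : ι → ℝ => (g ⬝ᵥ a, g ⬝ᵥ b)) = fun g => L fun j => g j := by
    funext g; simp [L, dotProduct, mul_comm]
  rw [hL]
  exact hid.map_fun L

theorem covariance_dotProduct_gaussianPi (a b : ι → ℝ) :
    cov[fun g : ι → ℝ => g ⬝ᵥ a, fun g => g ⬝ᵥ b; gaussianPi ι v] = v * (a ⬝ᵥ b) := by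
  classical
  unfold dotProduct
  rw [covariance_fun_sum_fun_sum (fun i => (memLp_eval_gaussianPi v i).mul_const _)
    (fun i => (memLp_eval_gaussianPi v i).mul_const _)]
  simp_rw [covariance_mul_const_left, covariance_mul_const_right, covariance_eval_gaussianPi,
    ite_mul, zero_mul, Finset.sum_ite_eq, Finset.mem_univ, if_true, Finset.mul_sum]
  exact Finset.sum_congr rfl fun i _ => by ring

theorem integral_dotProduct_gaussianPi (a : ι → ℝ) : ∫ g, g ⬝ᵥ a ∂gaussianPi ι v = 0 := by
  unfold dotProduct
  rw [integral_finsetSum _ fun i _ =>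
    ((memLp_eval_gaussianPi v i).integrable (by norm_num)).mul_const _]
  refine Finset.sum_eq_zero fun j _ => ?_
  rw [integral_mul_const, (hasLaw_eval_gaussianPi v j).integral_eq, integral_id_gaussianReal,
    zero_mul]

theorem hasLaw_dotProduct_gaussianPi (a : ι → ℝ) :
    HasLaw (fun g => g ⬝ᵥ a) (gaussianReal 0 (v * (a ⬝ᵥ a).toNNReal)) (gaussianPi ι v) := by
  refine ⟨by fun_prop, ?_⟩
  rw [(hasGaussianLaw_dotProduct_prodMk v a a).fst.map_eq_gaussianReal,
    integral_dotProduct_gaussianPi, ← covariance_self (by fun_prop),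
    covariance_dotProduct_gaussianPi, Real.toNNReal_mul v.coe_nonneg, Real.toNNReal_coe]

theorem map_dotProduct_prodMk_gaussianPi {a b : ι → ℝ} (hab : a ⬝ᵥ b = 0) :
    (gaussianPi ι v).map (fun g => (g ⬝ᵥ a, g ⬝ᵥ b)) =
      (gaussianReal 0 (v * (a ⬝ᵥ a).toNNReal)).prod
        (gaussianReal 0 (v * (b ⬝ᵥ b).toNNReal)) := by
  have hindep : IndepFun (fun g => g ⬝ᵥ a) (fun g => g ⬝ᵥ b) (gaussianPi ι v) :=
    (hasGaussianLaw_dotProduct_prodMk v a b).indepFun_of_covariance_eq_zero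
      (by rw [covariance_dotProduct_gaussianPi, hab, mul_zero])
  rw [(indepFun_iff_map_prod_eq_prod_map_map (by fun_prop) (by fun_prop)).1 hindep,
    (hasLaw_dotProduct_gaussianPi v a).map_eq, (hasLaw_dotProduct_gaussianPi v b).map_eq]

theorem integral_dotProduct_sq_gaussianPi (a : ι → ℝ) :
    ∫ g, (g ⬝ᵥ a) ^ 2 ∂gaussianPi ι v = v * (a ⬝ᵥ a) := by
  rw [← covariance_dotProduct_gaussianPi, covariance_self (by fun_prop),
    variance_of_integral_eq_zero (by fun_prop) (integral_dotProduct_gaussianPi v a)]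

theorem integrable_dotProduct_sq_gaussianPi (a : ι → ℝ) :
    Integrable (fun g => (g ⬝ᵥ a) ^ 2) (gaussianPi ι v) :=
  (hasGaussianLaw_dotProduct_prodMk v a a).fst.memLp_two.integrable_sq

theorem exists_orthogonal_decomposition (w x : ι → ℝ) :
    ∃ (β : ℝ) (z : ι → ℝ), w = β • x + z ∧ x ⬝ᵥ z = 0 ∧ z ⬝ᵥ z ≤ w ⬝ᵥ w := by
  refine ⟨w ⬝ᵥ x / x ⬝ᵥ x, w - (w ⬝ᵥ x / x ⬝ᵥ x) • x, by abel, ?_, ?_⟩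
  all_goals simp only [dotProduct_sub, sub_dotProduct, dotProduct_smul, smul_dotProduct,
    smul_eq_mul, dotProduct_comm x w]
  · rcases eq_or_ne (x ⬝ᵥ x) 0 with hx | hx
    · simp [dotProduct_self_eq_zero.1 hx]
    · field_simp; ring
  · rcases eq_or_ne (x ⬝ᵥ x) 0 with hx | hx
    · simp [hx]
    · have hx0 : 0 ≤ x ⬝ᵥ x := dotProduct_self_nonneg x
      have : w ⬝ᵥ x / x ⬝ᵥ x * (x ⬝ᵥ x) = w ⬝ᵥ x := div_mul_cancel₀ _ hx
      have h0 : 0 ≤ w ⬝ᵥ x / x ⬝ᵥ x * (w ⬝ᵥ x) := by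
        rw [div_mul_eq_mul_div]; exact div_nonneg (mul_self_nonneg _) hx0
      rw [this]
      linarith

theorem lintegral_exp_bilinear_gaussianPi {x z : ι → ℝ} (hxz : x ⬝ᵥ z = 0) {s β κ : ℝ}
    (h : s ^ 2 * (v * (z ⬝ᵥ z)) / 2 ≤ s * β - κ) :
    ∫⁻ g, ENNReal.ofReal (Real.exp (-s * (g ⬝ᵥ (β • x + z)) * (g ⬝ᵥ x) + κ * (g ⬝ᵥ x) ^ 2))
        ∂gaussianPi ι v =
      ENNReal.ofReal (Real.sqrt (1 + 2 * (s * β - κ - s ^ 2 * (v * (z ⬝ᵥ z)) / 2) *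
        (v * (x ⬝ᵥ x))))⁻¹ := by
  have hvar : ∀ y : ι → ℝ, ((v * (y ⬝ᵥ y).toNNReal : NNReal) : ℝ) = v * (y ⬝ᵥ y) := fun y => by
    rw [NNReal.coe_mul, Real.coe_toNNReal _ (dotProduct_self_nonneg y)]
  calc ∫⁻ g, ENNReal.ofReal (Real.exp (-s * (g ⬝ᵥ (β • x + z)) * (g ⬝ᵥ x) + κ * (g ⬝ᵥ x) ^ 2))
        ∂gaussianPi ι v
      = ∫⁻ q : ℝ × ℝ, ENNReal.ofReal (Real.exp (-s * q.1 * q.2 - (s * β - κ) * q.1 ^ 2))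
          ∂(gaussianPi ι v).map fun g => (g ⬝ᵥ x, g ⬝ᵥ z) := by
        rw [lintegral_map (by fun_prop) (by fun_prop)]
        refine lintegral_congr fun g => ?_
        rw [dotProduct_add, dotProduct_smul, smul_eq_mul]
        congr 2
        ring
    _ = _ := by
        rw [map_dotProduct_prodMk_gaussianPi v hxz,
          lintegral_exp_quadratic_prod_gaussianReal _ _ (by rw [hvar]; exact h), hvar, hvar]

theorem lintegral_exp_bilinear_gaussianPi_le (w x : ι → ℝ) {s κ : ℝ}
    (h : 0 ≤ s * (w ⬝ᵥ x) - κ * (x ⬝ᵥ x) - s ^ 2 * v * (w ⬝ᵥ w) * (x ⬝ᵥ x) / 2) :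
    ∫⁻ g, ENNReal.ofReal (Real.exp (-s * (g ⬝ᵥ w) * (g ⬝ᵥ x) + κ * (g ⬝ᵥ x) ^ 2))
        ∂gaussianPi ι v ≤
      ENNReal.ofReal (Real.sqrt (1 + 2 * (s * (w ⬝ᵥ x) - κ * (x ⬝ᵥ x) -
        s ^ 2 * v * (w ⬝ᵥ w) * (x ⬝ᵥ x) / 2) * v))⁻¹ := by
  have hX : 0 ≤ x ⬝ᵥ x := dotProduct_self_nonneg x
  rcases hX.eq_or_lt' with hx | hx
  · simp [dotProduct_self_eq_zero.1 hx]
  obtain ⟨β, z, rfl, hxz, hzw⟩ := exists_orthogonal_decomposition w x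
  set w := β • x + z
  have hwx : w ⬝ᵥ x = β * (x ⬝ᵥ x) := by
    rw [add_dotProduct, smul_dotProduct, dotProduct_comm z, hxz, smul_eq_mul, add_zero]
  rw [hwx] at h ⊢
  have hcoef : s ^ 2 * (v * (z ⬝ᵥ z)) / 2 ≤ s * β - κ := by
    have hw : s ^ 2 * v * (w ⬝ᵥ w) / 2 ≤ s * β - κ := by
      refine le_of_mul_le_mul_right ?_ hx
      linarith
    have : s ^ 2 * v * (z ⬝ᵥ z) ≤ s ^ 2 * v * (w ⬝ᵥ w) := by gcongr
    linarith
  rw [lintegral_exp_bilinear_gaussianPi v hxz hcoef]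
  have hz : s ^ 2 * v * (z ⬝ᵥ z) * (x ⬝ᵥ x) * v ≤ s ^ 2 * v * (w ⬝ᵥ w) * (x ⬝ᵥ x) * v := by
    gcongr
  refine ENNReal.ofReal_le_ofReal (inv_anti₀ (Real.sqrt_pos.2 ?_) (Real.sqrt_le_sqrt ?_))
  · have := mul_nonneg h v.coe_nonneg
    linarith
  · linarith

end Gaussian

section PACBayes

variable {α U : Type*} {n : ℕ}

/-- The fraction of the points of the sample `S` that lie in `E` (zero for the empty sample). -/
def empFreq (S : Fin n → α) (E : Set α) : ℝ := (Nat.card {i : Fin n // S i ∈ E} : ℝ) / n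

theorem empFreq_eq_sum_indicator_div (S : Fin n → α) (E : Set α) :
    empFreq S E = (∑ i, E.indicator 1 (S i)) / n := by
  classical
  simp [empFreq, Nat.card_eq_fintype_card, Fintype.card_subtype, Set.indicator_apply]

theorem empFreq_mem_Icc (S : Fin n → α) (E : Set α) : empFreq S E ∈ Set.Icc (0 : ℝ) 1 := by
  refine ⟨by unfold empFreq; positivity, div_le_one_of_le₀ ?_ n.cast_nonneg⟩
  have := Finite.card_subtype_le fun i => S i ∈ E
  rw [Nat.card_fin] at this
  exact_mod_cast this

variable [MeasurableSpace α] [MeasurableSpace U]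

theorem measurable_empFreq {E : U → Set α} (hE : MeasurableSet {z : U × α | z.2 ∈ E z.1}) :
    Measurable fun z : (Fin n → α) × U => empFreq z.1 (E z.2) := by
  simp_rw [empFreq_eq_sum_indicator_div]
  refine (Finset.measurable_fun_sum _ fun i _ => ?_).div_const _
  have hpair : Measurable fun z : (Fin n → α) × U => (z.2, z.1 i) := by fun_prop
  exact (measurable_one.indicator hE).comp hpair

variable (D : Measure α)

/-- The exponent `n (θ Ê(E) - (exp θ - 1) D(E))` of Chernoff's bound, where `Ê(E)` is the empirical
frequency of `E`: by `1 + x ≤ exp x` its exponential has mean at most `1` over the sample. -/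
def chernoffExponent (θ : ℝ) (S : Fin n → α) (E : Set α) : ℝ :=
  n * (θ * empFreq S E - (Real.exp θ - 1) * D.real E)

/-- The `ν`-average, over a family `E` of events, of the exponential of `chernoffExponent`. -/
def pacMoment (ν : Measure U) (E : U → Set α) (θ : ℝ) (S : Fin n → α) : ENNReal :=
  ∫⁻ u, ENNReal.ofReal (Real.exp (chernoffExponent D θ S (E u))) ∂ν

variable [IsProbabilityMeasure D]

theorem lintegral_exp_indicator_le (θ : ℝ) {E : Set α} (hE : MeasurableSet E) :
    ∫⁻ q, ENNReal.ofReal (Real.exp (θ * E.indicator 1 q)) ∂D ≤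
      ENNReal.ofReal (Real.exp ((Real.exp θ - 1) * D.real E)) := by
  have hexp : ∀ q, Real.exp (θ * E.indicator 1 q) =
      1 + E.indicator (fun _ => Real.exp θ - 1) q := fun q => by
    by_cases hq : q ∈ E <;> simp [hq]
  have hind : Integrable (E.indicator fun _ => Real.exp θ - 1) D :=
    (integrable_const _).indicator hE
  have hint : Integrable (fun q => 1 + E.indicator (fun _ => Real.exp θ - 1) q) D :=
    (integrable_const _).add hind
  simp_rw [hexp]
  rw [← ofReal_integral_eq_lintegral_ofReal hint
      (ae_of_all _ fun q => (Real.exp_pos _).le.trans_eq (hexp q)),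
    integral_add (integrable_const _) hind, integral_indicator_const _ hE, integral_const,
    probReal_univ, one_smul, smul_eq_mul, add_comm, mul_comm]
  exact ENNReal.ofReal_le_ofReal (Real.add_one_le_exp _)

theorem lintegral_exp_chernoffExponent_le_one (θ : ℝ) {E : Set α} (hE : MeasurableSet E) :
    ∫⁻ S : Fin n → α, ENNReal.ofReal (Real.exp (chernoffExponent D θ S E))
      ∂Measure.pi (fun _ => D) ≤ 1 := by
  rcases n.eq_zero_or_pos with rfl | hn
  · simp [chernoffExponent]
  set a : ℝ := (Real.exp θ - 1) * D.real E
  have hsum : ∀ S : Fin n → α,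
      chernoffExponent D θ S E = ∑ i, (-a + θ * E.indicator 1 (S i)) := fun S => by
    have : (n : ℝ) ≠ 0 := by positivity
    rw [chernoffExponent, empFreq_eq_sum_indicator_div, Finset.sum_add_distrib, ← Finset.mul_sum,
      Finset.sum_const, Finset.card_univ, Fintype.card_fin, nsmul_eq_mul]
    field_simp
    ring
  have : Measurable (E.indicator (1 : α → ℝ)) := measurable_one.indicator hE
  simp_rw [hsum]
  rw [lintegral_exp_sum_pi (fun _ => D) (f := fun _ q => -a + θ * E.indicator 1 q)
    fun _ => by fun_prop]
  refine Finset.prod_le_one' fun i _ => ?_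
  simp_rw [ofReal_exp_add]
  rw [lintegral_const_mul _ (by fun_prop)]
  calc ENNReal.ofReal (Real.exp (-a)) * ∫⁻ q, ENNReal.ofReal (Real.exp (θ * E.indicator 1 q)) ∂D
      ≤ ENNReal.ofReal (Real.exp (-a)) * ENNReal.ofReal (Real.exp a) := by
        gcongr; exact lintegral_exp_indicator_le D θ hE
    _ = 1 := by rw [← ofReal_exp_add, neg_add_cancel, Real.exp_zero, ENNReal.ofReal_one]

theorem measurable_exp_chernoffExponent {E : U → Set α}
    (hE : MeasurableSet {z : U × α | z.2 ∈ E z.1}) (θ : ℝ) :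
    Measurable fun z : (Fin n → α) × U =>
      ENNReal.ofReal (Real.exp (chernoffExponent D θ z.1 (E z.2))) := by
  have hD : Measurable fun u => D.real (E u) := (measurable_measure_prodMk_left hE).ennreal_toReal
  have hemp := measurable_empFreq (n := n) hE
  exact ((((hemp.const_mul θ).sub ((hD.comp measurable_snd).const_mul _)).const_mul
    (n : ℝ)).exp).ennreal_ofReal

theorem measurable_pacMoment (ν : Measure U) [SFinite ν] {E : U → Set α}
    (hE : MeasurableSet {z : U × α | z.2 ∈ E z.1}) (θ : ℝ) :
    Measurable fun S : Fin n → α => pacMoment D ν E θ S :=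
  (measurable_exp_chernoffExponent D hE θ).lintegral_prod_right'

theorem lintegral_pacMoment_le (ν : Measure U) [SFinite ν] {E : U → Set α}
    (hE : MeasurableSet {z : U × α | z.2 ∈ E z.1}) (θ : ℝ) :
    ∫⁻ S : Fin n → α, pacMoment D ν E θ S ∂Measure.pi (fun _ => D) ≤ ν Set.univ := by
  unfold pacMoment
  rw [lintegral_lintegral_swap (measurable_exp_chernoffExponent D hE θ).aemeasurable,
    ← lintegral_one]
  exact lintegral_mono fun u =>
    lintegral_exp_chernoffExponent_le_one D θ (measurable_prodMk_left hE)

variable {Ω : Type*} [MeasurableSpace Ω] {P : Measure Ω} {ν : Measure U} {E : U → Set α} {Φ : Ω → U}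

theorem lintegral_exp_sub_le_pacMoment (hE : MeasurableSet {z : U × α | z.2 ∈ E z.1}) {pen : Ω → ℝ}
    (hpen : AEMeasurable pen P) (hΦ : Measurable Φ)
    (hdom : (P.withDensity fun ω => ENNReal.ofReal (Real.exp (-pen ω))).map Φ ≤ ν) (θ : ℝ)
    (S : Fin n → α) :
    ∫⁻ ω, ENNReal.ofReal (Real.exp (chernoffExponent D θ S (E (Φ ω)) - pen ω)) ∂P ≤
      pacMoment D ν E θ S := by
  have hpair : Measurable fun u : U => (S, u) := measurable_const.prodMk measurable_id
  have hmeas : Measurable fun u => ENNReal.ofReal (Real.exp (chernoffExponent D θ S (E u))) := by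
    simpa only [Function.comp_def] using (measurable_exp_chernoffExponent D hE θ).comp hpair
  simp_rw [sub_eq_neg_add, ofReal_exp_add]
  refine (lintegral_mul_comp_eq_lintegral_map_withDensity (by fun_prop) hΦ hmeas).trans_le ?_
  exact lintegral_mono' hdom le_rfl

variable [IsProbabilityMeasure P]

theorem integrable_measureReal_comp (hE : MeasurableSet {z : U × α | z.2 ∈ E z.1})
    (hΦ : Measurable Φ) : Integrable (fun ω => D.real (E (Φ ω))) P :=
  have hD : Measurable fun ω => D.real (E (Φ ω)) :=
    (measurable_measure_prodMk_left hE).ennreal_toReal.comp hΦ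
  .of_mem_Icc 0 1 hD.aemeasurable
    (ae_of_all _ fun _ => ⟨measureReal_nonneg, measureReal_le_one⟩)

theorem integrable_empFreq_comp (hE : MeasurableSet {z : U × α | z.2 ∈ E z.1}) (hΦ : Measurable Φ)
    (S : Fin n → α) : Integrable (fun ω => empFreq S (E (Φ ω))) P := by
  have hpair : Measurable fun ω => (S, Φ ω) := measurable_const.prodMk hΦ
  have hemp := (measurable_empFreq (n := n) hE).comp hpair
  exact .of_mem_Icc 0 1 hemp.aemeasurable (ae_of_all _ fun _ => empFreq_mem_Icc S _)

theorem integral_chernoffExponent_le (hE : MeasurableSet {z : U × α | z.2 ∈ E z.1})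
    (hΦ : Measurable Φ) {pen : Ω → ℝ} (hpen : Integrable pen P)
    (hdom : (P.withDensity fun ω => ENNReal.ofReal (Real.exp (-pen ω))).map Φ ≤ ν) {θ R : ℝ}
    (hR : 0 < R) {S : Fin n → α} (hS : pacMoment D ν E θ S ≤ ENNReal.ofReal R) :
    n * (θ * ∫ ω, empFreq S (E (Φ ω)) ∂P - (Real.exp θ - 1) * ∫ ω, D.real (E (Φ ω)) ∂P) ≤
      Real.log R + ∫ ω, pen ω ∂P := by
  have hD := (integrable_measureReal_comp D hE (P := P) hΦ).const_mul (Real.exp θ - 1)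
  have hemp := (integrable_empFreq_comp hE (P := P) hΦ S).const_mul θ
  have hexponent : Integrable (fun ω => chernoffExponent D θ S (E (Φ ω))) P :=
    (hemp.sub hD).const_mul n
  have hlog := integral_le_log_of_lintegral_exp_le (hexponent.sub hpen) hR
    ((lintegral_exp_sub_le_pacMoment D hE hpen.aemeasurable hΦ hdom θ S).trans hS)
  rw [integral_sub' hexponent hpen] at hlog
  simp only [chernoffExponent] at hlog
  rw [integral_const_mul, integral_sub hemp hD, integral_const_mul, integral_const_mul] at hlog
  linarith

theorem pac_bayes (hE : MeasurableSet {z : U × α | z.2 ∈ E z.1}) (hn : 0 < n) [IsFiniteMeasure ν]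
    (hν : 0 < ν.real Set.univ) {l : ℝ} (hl : 0 < l) (hl1 : l ≤ 1) {δ : ℝ} (hδ : 0 < δ) :
    ENNReal.ofReal (1 - δ) ≤ (Measure.pi fun _ => D) {S : Fin n → α |
      ∀ (Φ : Ω → U) (pen : Ω → ℝ), Measurable Φ → Integrable pen P →
        (P.withDensity fun ω => ENNReal.ofReal (Real.exp (-pen ω))).map Φ ≤ ν →
        |∫ ω, (D.real (E (Φ ω)) - empFreq S (E (Φ ω))) ∂P| ≤
          l * ∫ ω, D.real (E (Φ ω)) ∂P +
            (Real.log (2 * ν.real Set.univ / δ) + ∫ ω, pen ω ∂P) / (l * n)} := by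
  have hmean : ∫⁻ S : Fin n → α, (pacMoment D ν E l S + pacMoment D ν E (-l) S)
      ∂Measure.pi (fun _ => D) ≤ ENNReal.ofReal (2 * ν.real Set.univ) := by
    rw [lintegral_add_left (measurable_pacMoment D ν hE l), ENNReal.ofReal_mul two_pos.le,
      ENNReal.ofReal_ofNat, ofReal_measureReal, two_mul]
    exact add_le_add (lintegral_pacMoment_le D ν hE l) (lintegral_pacMoment_le D ν hE (-l))
  refine (ofReal_one_sub_le_measure_le_div _ ((measurable_pacMoment D ν hE l).add
    (measurable_pacMoment D ν hE (-l))) (by positivity) hδ hmean).trans (measure_mono ?_)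
  intro S hS Φ pen hΦ hpen hdom
  rw [integral_sub (integrable_measureReal_comp D hE hΦ) (integrable_empFreq_comp hE hΦ S)]
  refine abs_sub_le_of_forall_sign (Nat.cast_pos.2 hn) hl hl1
    (integral_nonneg fun _ => measureReal_nonneg) fun θ hθ =>
      integral_chernoffExponent_le D hE hΦ hpen hdom (by positivity) ?_
  rcases eq_or_eq_neg_of_abs_eq hθ with rfl | rfl
  · exact le_self_add.trans hS
  · exact le_add_self.trans hS

end PACBayes

section Rounding

variable {k m : ℕ}

/-- The randomized rounding of a single real number `g` with threshold `t`: this is the map that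
`hRound` applies in each coordinate. -/
def roundCoord (k : ℕ) (t g : ℝ) : ℝ :=
  if t ≤ roundProb k g then roundDown k g else roundDown k g + gridStep k

theorem hRound_apply (A : Fin k → Fin m → ℝ) (t : Fin k → ℝ) (w : Fin m → ℝ) (r : Fin k) :
    hRound A t w r = roundCoord k (t r) (A r ⬝ᵥ w) := rfl

theorem gridStep_pos (hk : 0 < k) : 0 < gridStep k := by
  unfold gridStep; positivity

theorem gridStep_sq (k : ℕ) : gridStep k ^ 2 = (100 * k : ℝ)⁻¹ := by
  rw [gridStep, inv_pow, mul_pow, Real.sq_sqrt k.cast_nonneg]; norm_num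

theorem roundDown_le (hk : 0 < k) (g : ℝ) : roundDown k g ≤ g := by
  have hfloor := Int.floor_le ((g - gridStep k / 2) / gridStep k)
  rw [le_div_iff₀ (gridStep_pos hk)] at hfloor
  unfold roundDown; linarith

theorem lt_roundDown_add_gridStep (hk : 0 < k) (g : ℝ) : g < roundDown k g + gridStep k := by
  have hfloor := Int.lt_floor_add_one ((g - gridStep k / 2) / gridStep k)
  rw [div_lt_iff₀ (gridStep_pos hk)] at hfloor
  unfold roundDown; linarith

theorem roundProb_mem_Icc (hk : 0 < k) (g : ℝ) : roundProb k g ∈ Set.Icc (0 : ℝ) 1 := by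
  have hs := gridStep_pos hk
  have hle := roundDown_le hk g
  have hlt := lt_roundDown_add_gridStep hk g
  refine ⟨sub_nonneg.2 ((div_le_one hs).2 (by linarith)), sub_le_self 1 ?_⟩
  exact div_nonneg (by linarith) hs.le

@[fun_prop]
theorem measurable_roundDown (k : ℕ) : Measurable (roundDown k) := by
  have hfloor : Measurable fun g : ℝ => (⌊(g - gridStep k / 2) / gridStep k⌋ : ℝ) :=
    measurable_from_top.comp (Int.measurable_floor.comp (by fun_prop))
  unfold roundDown; fun_prop

@[fun_prop]
theorem measurable_roundProb (k : ℕ) : Measurable (roundProb k) := by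
  unfold roundProb; fun_prop

@[fun_prop]
theorem measurable_roundCoord {α : Type*} [MeasurableSpace α] {t g : α → ℝ} (ht : Measurable t)
    (hg : Measurable g) : Measurable fun a => roundCoord k (t a) (g a) :=
  Measurable.ite (measurableSet_le ht (by fun_prop)) (by fun_prop) (by fun_prop)

@[fun_prop]
theorem measurable_hRound (w : Fin m → ℝ) :
    Measurable fun p : (Fin k → Fin m → ℝ) × (Fin k → ℝ) => hRound p.1 p.2 w := by
  simp_rw [measurable_pi_iff, hRound_apply]
  fun_prop

@[fun_prop]
theorem measurable_matVec (x : Fin m → ℝ) :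
    Measurable fun A : Fin k → Fin m → ℝ => matVec A x := by
  unfold matVec; fun_prop

theorem roundCoord_mem_Icc (hk : 0 < k) (t g : ℝ) :
    roundCoord k t g ∈ Set.Icc (roundDown k g) (roundDown k g + gridStep k) := by
  have hs := gridStep_pos hk
  unfold roundCoord; split_ifs <;> constructor <;> linarith

/-- The uniform law on `[0, 1]`. -/
abbrev uniformUnit : Measure ℝ := volume.restrict (Set.Icc (0 : ℝ) 1)

instance isProbabilityMeasure_uniformUnit : IsProbabilityMeasure uniformUnit := ⟨by simp⟩

instance isProbabilityMeasure_roundMeasure (k m : ℕ) :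
    IsProbabilityMeasure (roundMeasure k m) := by
  unfold roundMeasure; infer_instance

theorem integral_roundCoord (hk : 0 < k) (g : ℝ) :
    ∫ t, roundCoord k t g ∂uniformUnit = g := by
  obtain ⟨hp0, hp1⟩ := roundProb_mem_Icc hk g
  have hcoord : (fun t => roundCoord k t g) = fun t => roundDown k g + gridStep k -
      (Set.Iic (roundProb k g)).indicator (fun _ => gridStep k) t := by
    funext t
    by_cases ht : t ≤ roundProb k g <;> simp [roundCoord, ht]
  have hprob : uniformUnit.real (Set.Iic (roundProb k g)) = roundProb k g := by
    have hset : Set.Iic (roundProb k g) ∩ Set.Icc 0 1 = Set.Icc 0 (roundProb k g) := by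
      ext t
      exact ⟨fun h => ⟨h.2.1, h.1⟩, fun h => ⟨h.2, h.1, h.2.trans hp1⟩⟩
    rw [measureReal_restrict_apply measurableSet_Iic, hset, Real.volume_real_Icc_of_le hp0,
      sub_zero]
  rw [hcoord, integral_sub (integrable_const _)
    ((integrable_const _).indicator measurableSet_Iic), integral_indicator_const _
    measurableSet_Iic, hprob, integral_const, probReal_univ, one_smul, smul_eq_mul, roundProb]
  have := (gridStep_pos hk).ne'
  field_simp
  ring

theorem lintegral_exp_roundCoord_le (hk : 0 < k) (g b : ℝ) :
    ∫⁻ t, ENNReal.ofReal (Real.exp (b * roundCoord k t g)) ∂uniformUnit ≤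
      ENNReal.ofReal (Real.exp (b * g + gridStep k ^ 2 / 8 * b ^ 2)) := by
  have hsub := hasSubgaussianMGF_of_mem_Icc (μ := uniformUnit)
    (by fun_prop : AEMeasurable (fun t => roundCoord k t g) uniformUnit)
    (ae_of_all _ fun t => roundCoord_mem_Icc hk t g)
  rw [integral_roundCoord hk] at hsub
  have hcenter : ∀ t, b * roundCoord k t g = b * g + b * (roundCoord k t g - g) := fun t => by ring
  simp_rw [hcenter, ofReal_exp_add]
  rw [lintegral_const_mul _ (by fun_prop), ← ofReal_integral_eq_lintegral_ofReal
    (hsub.integrable_exp_mul b) (ae_of_all _ fun t => (Real.exp_pos _).le)]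
  gcongr
  refine (hsub.mgf_le b).trans_eq ?_
  congr 1
  simp only [add_sub_cancel_left, NNReal.coe_pow, NNReal.coe_div, coe_nnnorm, Real.norm_eq_abs,
    abs_of_pos (gridStep_pos hk), NNReal.coe_ofNat]
  ring

theorem lintegral_exp_dotProduct_hRound_le (hk : 0 < k) (A : Fin k → Fin m → ℝ) (w : Fin m → ℝ)
    (b : Fin k → ℝ) :
    ∫⁻ t, ENNReal.ofReal (Real.exp (b ⬝ᵥ hRound A t w)) ∂Measure.pi (fun _ => uniformUnit) ≤
      ENNReal.ofReal (Real.exp (b ⬝ᵥ matVec A w + gridStep k ^ 2 / 8 * (b ⬝ᵥ b))) := by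
  simp only [dotProduct, hRound_apply, Finset.mul_sum, ← Finset.sum_add_distrib]
  rw [lintegral_exp_sum_pi (fun _ => uniformUnit)
    (f := fun r t => b r * roundCoord k t (∑ j, A r j * w j)) (fun r => by fun_prop),
    ofReal_exp_sum]
  gcongr with r
  refine (lintegral_exp_roundCoord_le hk _ _).trans_eq ?_
  rw [sq (b r)]
  rfl

theorem lintegral_exp_neg_mul_hRound_dotProduct_le_pow (hk : 0 < k) (w x : Fin m → ℝ) (s : ℝ) :
    ∫⁻ p, ENNReal.ofReal (Real.exp (-s * (hRound p.1 p.2 w ⬝ᵥ matVec p.1 x)))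
        ∂roundMeasure k m ≤
      (∫⁻ g, ENNReal.ofReal (Real.exp (-s * (g ⬝ᵥ w) * (g ⬝ᵥ x) +
        gridStep k ^ 2 / 8 * s ^ 2 * (g ⬝ᵥ x) ^ 2)) ∂gaussianPi (Fin m) (k⁻¹ : NNReal)) ^ k := by
  set κ : ℝ := gridStep k ^ 2 / 8 * s ^ 2 with hκ
  calc ∫⁻ p, ENNReal.ofReal (Real.exp (-s * (hRound p.1 p.2 w ⬝ᵥ matVec p.1 x)))
        ∂roundMeasure k m
      ≤ ∫⁻ A, ENNReal.ofReal (Real.exp (∑ r, (-s * (A r ⬝ᵥ w) * (A r ⬝ᵥ x) +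
          κ * (A r ⬝ᵥ x) ^ 2))) ∂Measure.pi fun _ => gaussianPi (Fin m) (k⁻¹ : NNReal) := by
        rw [roundMeasure, lintegral_prod _ (by fun_prop)]
        refine lintegral_mono fun A => ?_
        have hlin : ∀ t, -s * (hRound A t w ⬝ᵥ matVec A x) = (-s • matVec A x) ⬝ᵥ hRound A t w :=
          fun t => by rw [smul_dotProduct, dotProduct_comm, smul_eq_mul]
        simp only [hlin]
        refine (lintegral_exp_dotProduct_hRound_le hk A w _).trans_eq ?_
        congr 2
        change ∑ r, -s * (A r ⬝ᵥ x) * (A r ⬝ᵥ w) +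
          gridStep k ^ 2 / 8 * ∑ r, -s * (A r ⬝ᵥ x) * (-s * (A r ⬝ᵥ x)) = _
        rw [Finset.mul_sum, ← Finset.sum_add_distrib]
        exact Finset.sum_congr rfl fun r _ => by rw [hκ]; ring
    _ = _ := by
        rw [lintegral_exp_sum_pi (fun _ => gaussianPi (Fin m) (k⁻¹ : NNReal))
          (f := fun _ g => -s * (g ⬝ᵥ w) * (g ⬝ᵥ x) + κ * (g ⬝ᵥ x) ^ 2) (fun _ => by fun_prop),
          Finset.prod_const, Finset.card_univ, Fintype.card_fin]

theorem lintegral_exp_neg_mul_hRound_dotProduct_le (hk : 0 < k) {w x : Fin m → ℝ}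
    (hw : w ⬝ᵥ w ≤ 1) (hx : x ⬝ᵥ x ≤ 1) {s a : ℝ} (ha : 0 ≤ a)
    (has : a ≤ s * (w ⬝ᵥ x) - 401 / 800 * s ^ 2 / k) :
    ∫⁻ p, ENNReal.ofReal (Real.exp (-s * (hRound p.1 p.2 w ⬝ᵥ matVec p.1 x)))
        ∂roundMeasure k m ≤
      ENNReal.ofReal (Real.sqrt (1 + 2 * a / k))⁻¹ ^ k := by
  set κ : ℝ := gridStep k ^ 2 / 8 * s ^ 2 with hκ
  have hrow : a ≤ s * (w ⬝ᵥ x) - κ * (x ⬝ᵥ x) -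
      s ^ 2 * (k⁻¹ : NNReal) * (w ⬝ᵥ w) * (x ⬝ᵥ x) / 2 := by
    have hwx : (w ⬝ᵥ w) * (x ⬝ᵥ x) ≤ 1 := mul_le_one₀ hw (dotProduct_self_nonneg x) hx
    have hbound : 401 / 800 * s ^ 2 / k = κ * 1 + s ^ 2 * (k⁻¹ : NNReal) * 1 / 2 := by
      have : (k : ℝ) ≠ 0 := by positivity
      rw [hκ, gridStep_sq]
      push_cast
      field_simp
      ring
    have hκx : κ * (x ⬝ᵥ x) ≤ κ * 1 := by gcongr
    have hsx : s ^ 2 * (k⁻¹ : NNReal) * ((w ⬝ᵥ w) * (x ⬝ᵥ x)) ≤ s ^ 2 * (k⁻¹ : NNReal) * 1 := by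
      gcongr
    rw [hbound] at has
    linarith
  refine (lintegral_exp_neg_mul_hRound_dotProduct_le_pow hk w x s).trans ?_
  gcongr
  refine (lintegral_exp_bilinear_gaussianPi_le _ w x (ha.trans hrow)).trans ?_
  rw [div_eq_mul_inv (2 * a), ← NNReal.coe_natCast, ← NNReal.coe_inv]
  gcongr

theorem roundMeasure_hRound_dotProduct_le (hk : 0 < k) {w x : Fin m → ℝ} (hw : w ⬝ᵥ w ≤ 1)
    (hx : x ⬝ᵥ x ≤ 1) {γ : ℝ} (hγ : 0 < γ) (hγ1 : γ ≤ 1) (hwx : 3 / 4 * γ ≤ w ⬝ᵥ x) :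
    roundMeasure k m {p | hRound p.1 p.2 w ⬝ᵥ matVec p.1 x ≤ γ / 2} ≤
      ENNReal.ofReal (Real.exp (-(γ ^ 2 * k / 100))) := by
  set s : ℝ := k * γ / 10 with hs
  set a : ℝ := 69 / 1000 * (k * γ ^ 2) with ha
  have has : a ≤ s * (w ⬝ᵥ x) - 401 / 800 * s ^ 2 / k := by
    have hsx : s * (3 / 4 * γ) ≤ s * (w ⬝ᵥ x) := by gcongr
    have hs1 : s * (3 / 4 * γ) = 3 / 40 * (k * γ ^ 2) := by rw [hs]; ring
    have hs2 : 401 / 800 * s ^ 2 / k = 401 / 80000 * (k * γ ^ 2) := by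
      rw [hs]; field_simp; ring
    have : 0 ≤ k * γ ^ 2 := by positivity
    linarith
  have hmgf : (Real.sqrt (1 + 2 * a / k))⁻¹ ≤ Real.exp (-(6 / 100 * γ ^ 2)) := by
    have hγ2 : γ ^ 2 ≤ 1 := pow_le_one₀ hγ.le hγ1
    have hak : 2 * a / k = 138 / 1000 * γ ^ 2 := by rw [ha]; field_simp; ring
    rw [hak]
    refine (inv_sqrt_one_add_le_exp (by positivity)).trans (Real.exp_le_exp.2 (neg_le_neg ?_))
    rw [le_div_iff₀ (by positivity)]
    nlinarith [sq_nonneg γ]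
  calc roundMeasure k m {p | hRound p.1 p.2 w ⬝ᵥ matVec p.1 x ≤ γ / 2}
      ≤ ENNReal.ofReal (Real.exp (s * (γ / 2))) *
          ENNReal.ofReal (Real.exp (-(6 / 100 * γ ^ 2))) ^ k := by
        have hs0 : 0 ≤ s := by positivity
        refine (measure_le_le_exp_mul_lintegral_exp _ (by fun_prop) hs0 _).trans ?_
        gcongr
        refine (lintegral_exp_neg_mul_hRound_dotProduct_le hk hw hx (by positivity) has).trans ?_
        gcongr
    _ = ENNReal.ofReal (Real.exp (-(γ ^ 2 * k / 100))) := by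
        rw [← ENNReal.ofReal_pow (Real.exp_pos _).le, ← Real.exp_nat_mul, ← ofReal_exp_add, hs]
        congr 2
        ring

end Rounding

section Loss

variable {k m : ℕ}

/-- The set of labeled points `(x, y)` on which the hypothesis `h`, applied to `A x`, has margin at
most `γ`. Its mass under `D` is `kLossD`, its frequency in a sample is `kLossS`. -/
def marginEvent (γ : ℝ) (h : Fin k → ℝ) (A : Fin k → Fin m → ℝ) : Set ((Fin m → ℝ) × ℝ) :=
  {q | q.2 * (h ⬝ᵥ matVec A q.1) ≤ γ}

theorem measurableSet_mem_marginEvent {Ω : Type*} [MeasurableSpace Ω] (γ : ℝ)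
    {h : Ω → Fin k → ℝ} {A : Ω → Fin k → Fin m → ℝ} (hh : Measurable h) (hA : Measurable A) :
    MeasurableSet {z : Ω × ((Fin m → ℝ) × ℝ) | z.2 ∈ marginEvent γ (h z.1) (A z.1)} := by
  have hmargin : Measurable fun z : Ω × ((Fin m → ℝ) × ℝ) =>
      z.2.2 * (h z.1 ⬝ᵥ matVec (A z.1) z.2.1) := by
    unfold dotProduct matVec; fun_prop
  exact measurableSet_le hmargin measurable_const

theorem roundMeasure_marginEvent_hRound_le (hk : 0 < k) {w : Fin m → ℝ} (hw : w ⬝ᵥ w ≤ 1)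
    {q : (Fin m → ℝ) × ℝ} (hq : (q.2 • q.1) ⬝ᵥ (q.2 • q.1) ≤ 1) {γ : ℝ} (hγ : 0 < γ)
    (hγ1 : γ ≤ 1) (hwq : 3 / 4 * γ ≤ q.2 * (w ⬝ᵥ q.1)) :
    roundMeasure k m {p | q ∈ marginEvent (γ / 2) (hRound p.1 p.2 w) p.1} ≤
      ENNReal.ofReal (Real.exp (-(γ ^ 2 * k / 100))) := by
  have hmargin : ∀ p : (Fin k → Fin m → ℝ) × (Fin k → ℝ),
      hRound p.1 p.2 w ⬝ᵥ matVec p.1 (q.2 • q.1) =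
        q.2 * (hRound p.1 p.2 w ⬝ᵥ matVec p.1 q.1) := fun p => by
    rw [← smul_eq_mul, ← dotProduct_smul]
    exact congrArg _ (funext fun r => dotProduct_smul q.2 (p.1 r) q.1)
  simpa only [marginEvent, Set.mem_ofPred_eq, hmargin] using
    roundMeasure_hRound_dotProduct_le hk hw hq hγ hγ1
      (hwq.trans_eq (by rw [dotProduct_smul, smul_eq_mul]))

theorem lintegral_marginEvent_hRound_le (hk : 0 < k) (D : Measure ((Fin m → ℝ) × ℝ))
    [IsProbabilityMeasure D] (hD : ∀ᵐ q ∂D, (q.2 • q.1) ⬝ᵥ (q.2 • q.1) ≤ 1) {w : Fin m → ℝ}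
    (hw : w ⬝ᵥ w ≤ 1) {γ : ℝ} (hγ : 0 < γ) (hγ1 : γ ≤ 1) :
    ∫⁻ p, D (marginEvent (γ / 2) (hRound p.1 p.2 w) p.1) ∂roundMeasure k m ≤
      D {q | q.2 * dotp w q.1 ≤ 3 / 4 * γ} + ENNReal.ofReal (Real.exp (-(γ ^ 2 * k / 100))) := by
  set M : Set ((Fin m → ℝ) × ℝ) := {q | q.2 * dotp w q.1 ≤ 3 / 4 * γ}
  have hM : MeasurableSet M := measurableSet_le (by unfold dotp; fun_prop) measurable_const
  have hevent := measurableSet_mem_marginEvent (γ / 2)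
    (measurable_hRound (k := k) w) measurable_fst
  have hpoint : ∀ᵐ q ∂D,
      roundMeasure k m {p | q ∈ marginEvent (γ / 2) (hRound p.1 p.2 w) p.1} ≤
        M.indicator 1 q + ENNReal.ofReal (Real.exp (-(γ ^ 2 * k / 100))) := by
    filter_upwards [hD] with q hq
    by_cases hqM : q ∈ M
    · rw [Set.indicator_of_mem hqM]
      exact prob_le_one.trans le_self_add
    · rw [Set.indicator_of_notMem hqM, zero_add]
      exact roundMeasure_marginEvent_hRound_le hk hw hq hγ hγ1 (not_le.1 hqM).le
  calc ∫⁻ p, D (marginEvent (γ / 2) (hRound p.1 p.2 w) p.1) ∂roundMeasure k m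
      = ∫⁻ q, roundMeasure k m {p | q ∈ marginEvent (γ / 2) (hRound p.1 p.2 w) p.1} ∂D :=
        (Measure.prod_apply hevent).symm.trans (Measure.prod_apply_symm hevent)
    _ ≤ ∫⁻ q, (M.indicator 1 q + ENNReal.ofReal (Real.exp (-(γ ^ 2 * k / 100)))) ∂D :=
        lintegral_mono_ae hpoint
    _ = _ := by
        rw [lintegral_add_right _ measurable_const, lintegral_indicator_one hM, lintegral_const,
          measure_univ, mul_one]

theorem integral_kLossD_hRound_le (hk : 0 < k) (D : Measure ((Fin m → ℝ) × ℝ))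
    [IsProbabilityMeasure D] (hD : ∀ᵐ q ∂D, (q.2 • q.1) ⬝ᵥ (q.2 • q.1) ≤ 1) {w : Fin m → ℝ}
    (hw : w ⬝ᵥ w ≤ 1) {γ : ℝ} (hγ : 0 < γ) (hγ1 : γ ≤ 1) :
    ∫ p, kLossD D (γ / 2) (hRound p.1 p.2 w) p.1 ∂roundMeasure k m ≤
      lossD D (3 / 4 * γ) w + Real.exp (-(γ ^ 2 * k / 100)) := by
  have hmeas : Measurable fun p : (Fin k → Fin m → ℝ) × (Fin k → ℝ) =>
      D (marginEvent (γ / 2) (hRound p.1 p.2 w) p.1) :=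
    measurable_measure_prodMk_left
      (measurableSet_mem_marginEvent _ (measurable_hRound w) measurable_fst)
  have hloss : 0 ≤ lossD D (3 / 4 * γ) w := ENNReal.toReal_nonneg
  change ∫ p, (D (marginEvent (γ / 2) (hRound p.1 p.2 w) p.1)).toReal ∂roundMeasure k m ≤ _
  rw [integral_toReal hmeas.aemeasurable (ae_of_all _ fun _ => measure_lt_top _ _)]
  refine ENNReal.toReal_le_of_le_ofReal (by positivity) ?_
  rw [ENNReal.ofReal_add hloss (Real.exp_pos _).le, lossD, ENNReal.ofReal_toReal
    (measure_ne_top _ _)]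
  exact lintegral_marginEvent_hRound_le hk D hD hw hγ hγ1

end Loss

section GridPrior

/-- The finite measure on `ℤ` with weights `exp (-|z|)`. -/
def intExpMeasure : Measure ℤ :=
  Measure.count.withDensity fun z => ENNReal.ofReal (Real.exp (-|(z : ℝ)|))

theorem summable_exp_neg_abs_int : Summable fun z : ℤ => Real.exp (-|(z : ℝ)|) := by
  have hnat : Summable fun n : ℕ => Real.exp (-(n : ℝ)) := Real.summable_exp_neg_nat
  refine Summable.of_nat_of_neg ?_ ?_ <;> simpa using hnat

instance isFiniteMeasure_intExpMeasure : IsFiniteMeasure intExpMeasure := by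
  refine isFiniteMeasure_withDensity ?_
  rw [lintegral_count, ← ENNReal.ofReal_tsum_of_nonneg (fun _ => (Real.exp_pos _).le)
    summable_exp_neg_abs_int]
  exact ENNReal.ofReal_ne_top

theorem intExpMeasure_singleton (z : ℤ) :
    intExpMeasure {z} = ENNReal.ofReal (Real.exp (-|(z : ℝ)|)) := by
  rw [intExpMeasure, withDensity_apply _ (measurableSet_singleton z), lintegral_singleton,
    Measure.count_singleton, mul_one]

theorem one_le_intExpMeasure_real_univ : 1 ≤ intExpMeasure.real Set.univ := by
  have hzero : intExpMeasure.real {0} = 1 := by simp [Measure.real, intExpMeasure_singleton]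
  exact hzero.symm.trans_le (measureReal_mono (Set.subset_univ _))

/-- The unnormalized prior on indices of grid points of `ℝ^k`: the product of `k` copies of
`intExpMeasure`. -/
def gridPrior (k : ℕ) : Measure (Fin k → ℤ) := Measure.pi fun _ => intExpMeasure

instance isFiniteMeasure_gridPrior (k : ℕ) : IsFiniteMeasure (gridPrior k) := by
  unfold gridPrior; infer_instance

theorem gridPrior_real_univ (k : ℕ) :
    (gridPrior k).real Set.univ = intExpMeasure.real Set.univ ^ k := by
  rw [gridPrior, Measure.real, Measure.pi_univ, Finset.prod_const, Finset.card_univ,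
    Fintype.card_fin, ENNReal.toReal_pow, Measure.real]

theorem gridPrior_singleton {k : ℕ} (z : Fin k → ℤ) :
    gridPrior k {z} = ENNReal.ofReal (Real.exp (-∑ r, |(z r : ℝ)|)) := by
  rw [gridPrior, Measure.pi_singleton, ← Finset.sum_neg_distrib, ofReal_exp_sum]
  simp_rw [intExpMeasure_singleton]

variable {k m : ℕ}

/-- The grid point with integer index `z`. -/
def gridPt (k : ℕ) (z : Fin k → ℤ) : Fin k → ℝ := fun r => gridStep k / 2 + z r * gridStep k

theorem measurable_gridPt : Measurable (gridPt k) := by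
  unfold gridPt; fun_prop

/-- The index of the grid value `roundCoord k t g`. -/
def roundIndex (k : ℕ) (t g : ℝ) : ℤ :=
  ⌊(g - gridStep k / 2) / gridStep k⌋ + if t ≤ roundProb k g then 0 else 1

theorem roundCoord_eq_roundIndex (k : ℕ) (t g : ℝ) :
    roundCoord k t g = gridStep k / 2 + roundIndex k t g * gridStep k := by
  unfold roundCoord roundIndex roundDown
  split_ifs <;> push_cast <;> ring

@[fun_prop]
theorem measurable_roundIndex {α : Type*} [MeasurableSpace α] {t g : α → ℝ} (ht : Measurable t)
    (hg : Measurable g) : Measurable fun a => roundIndex k (t a) (g a) :=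
  (Int.measurable_floor.comp (by fun_prop)).add <|
    Measurable.ite (measurableSet_le ht (by fun_prop)) measurable_const measurable_const

theorem abs_roundIndex_le (hk : 0 < k) (t g : ℝ) :
    |(roundIndex k t g : ℝ)| ≤ 5 * k * g ^ 2 + 8 := by
  have : 0 < √(k : ℝ) := by positivity
  have hscale : (g - gridStep k / 2) / gridStep k = 10 * (√k * g) - 1 / 2 := by
    unfold gridStep; field_simp
  have hsq : (√k * g) ^ 2 = k * g ^ 2 := by rw [mul_pow, Real.sq_sqrt k.cast_nonneg]
  have hfloor := Int.floor_le ((g - gridStep k / 2) / gridStep k)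
  have hlt := Int.lt_floor_add_one ((g - gridStep k / 2) / gridStep k)
  have hupper := sq_nonneg (√k * g - 1)
  have hlower := sq_nonneg (√k * g + 1)
  unfold roundIndex
  generalize ⌊(g - gridStep k / 2) / gridStep k⌋ = z at *
  rw [abs_le]
  split_ifs <;> push_cast <;> constructor <;> linarith

/-- The matrix `A` together with the grid index of the rounding of `A w`. -/
def roundingCode (w : Fin m → ℝ) (p : (Fin k → Fin m → ℝ) × (Fin k → ℝ)) :
    (Fin k → Fin m → ℝ) × (Fin k → ℤ) :=
  (p.1, fun r => roundIndex k (p.2 r) (p.1 r ⬝ᵥ w))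

theorem gridPt_roundingCode (w : Fin m → ℝ) (p : (Fin k → Fin m → ℝ) × (Fin k → ℝ)) :
    gridPt k (roundingCode w p).2 = hRound p.1 p.2 w :=
  funext fun _ => (roundCoord_eq_roundIndex k _ _).symm

theorem measurable_roundingCode (w : Fin m → ℝ) : Measurable (roundingCode (k := k) w) := by
  unfold roundingCode; fun_prop

/-- The price, in the exponent, of replacing the law of `roundingCode w` by `codePrior`. -/
def codePenalty (w : Fin m → ℝ) (p : (Fin k → Fin m → ℝ) × (Fin k → ℝ)) : ℝ :=
  ∑ r, (5 * k * (p.1 r ⬝ᵥ w) ^ 2 + 8)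

/-- The PAC-Bayes prior on pairs of a matrix and a grid index: a Gaussian matrix and, independently,
an index drawn from `gridPrior`. It does not depend on the hypothesis `w`. -/
def codePrior (k m : ℕ) : Measure ((Fin k → Fin m → ℝ) × (Fin k → ℤ)) :=
  (Measure.pi fun _ => gaussianPi (Fin m) (k : NNReal)⁻¹).prod (gridPrior k)

instance isFiniteMeasure_codePrior (k m : ℕ) : IsFiniteMeasure (codePrior k m) := by
  unfold codePrior; infer_instance

theorem codePrior_real_univ (k m : ℕ) :
    (codePrior k m).real Set.univ = intExpMeasure.real Set.univ ^ k := by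
  rw [codePrior, ← Set.univ_prod_univ, measureReal_prod_prod, probReal_univ, one_mul,
    gridPrior_real_univ]

theorem map_roundingCode_withDensity_le (hk : 0 < k) (w : Fin m → ℝ) :
    ((roundMeasure k m).withDensity fun p => ENNReal.ofReal (Real.exp (-codePenalty w p))).map
      (roundingCode w) ≤ codePrior k m := by
  refine map_withDensity_le_prod _ _ _ (measurable_roundingCode w).snd fun p => ?_
  rw [gridPrior_singleton]
  gcongr
  exact Finset.sum_le_sum fun r _ => abs_roundIndex_le hk _ _

theorem measurePreserving_row (k m : ℕ) (r : Fin k) :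
    MeasurePreserving (fun p : (Fin k → Fin m → ℝ) × (Fin k → ℝ) => p.1 r) (roundMeasure k m)
      (gaussianPi (Fin m) (k : NNReal)⁻¹) :=
  (measurePreserving_eval (fun _ : Fin k => gaussianPi (Fin m) (k : NNReal)⁻¹) r).comp
    measurePreserving_fst

theorem integrable_row_dotProduct_sq (w : Fin m → ℝ) (r : Fin k) :
    Integrable (fun p : (Fin k → Fin m → ℝ) × (Fin k → ℝ) => (p.1 r ⬝ᵥ w) ^ 2)
      (roundMeasure k m) :=
  (measurePreserving_row k m r).integrable_comp_of_integrable
    (integrable_dotProduct_sq_gaussianPi _ w)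

theorem integrable_row_mul_dotProduct_sq_add (a b : ℝ) (w : Fin m → ℝ) (r : Fin k) :
    Integrable (fun p : (Fin k → Fin m → ℝ) × (Fin k → ℝ) => a * (p.1 r ⬝ᵥ w) ^ 2 + b)
      (roundMeasure k m) :=
  ((integrable_row_dotProduct_sq w r).const_mul a).add (integrable_const b)

theorem integrable_codePenalty (w : Fin m → ℝ) : Integrable (codePenalty w) (roundMeasure k m) :=
  integrable_finsetSum _ fun r _ => integrable_row_mul_dotProduct_sq_add _ _ w r

theorem integral_row_dotProduct_sq (w : Fin m → ℝ) (r : Fin k) :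
    ∫ p, (p.1 r ⬝ᵥ w) ^ 2 ∂roundMeasure k m = (k : ℝ)⁻¹ * (w ⬝ᵥ w) := by
  have hmap := integral_map (measurePreserving_row k m r).measurable.aemeasurable
    (μ := roundMeasure k m)
    (f := fun g => (g ⬝ᵥ w) ^ 2) (by fun_prop)
  rw [← hmap, (measurePreserving_row k m r).map_eq, integral_dotProduct_sq_gaussianPi,
    NNReal.coe_inv, NNReal.coe_natCast]

theorem integral_codePenalty_le (hk : 0 < k) {w : Fin m → ℝ} (hw : w ⬝ᵥ w ≤ 1) :
    ∫ p, codePenalty w p ∂roundMeasure k m ≤ 13 * k := by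
  have hrow : ∀ r : Fin k, ∫ p, (5 * k * (p.1 r ⬝ᵥ w) ^ 2 + 8) ∂roundMeasure k m =
      5 * (w ⬝ᵥ w) + 8 := fun r => by
    rw [integral_add ((integrable_row_dotProduct_sq w r).const_mul _) (integrable_const _),
      integral_const_mul, integral_row_dotProduct_sq, integral_const, probReal_univ, one_smul]
    field_simp
  unfold codePenalty
  rw [integral_finsetSum _ fun r _ => integrable_row_mul_dotProduct_sq_add _ _ w r]
  simp_rw [hrow]
  rw [Finset.sum_const, Finset.card_univ, Fintype.card_fin, nsmul_eq_mul, mul_comm]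
  gcongr
  linarith

end GridPrior

section Generalization

theorem ofReal_one_sub_le_trainM_forall_hRound_deviation_le {k m n : ℕ} (hk : 0 < k) (hn : 0 < n)
    (D : Measure ((Fin m → ℝ) × ℝ)) [IsProbabilityMeasure D] (γ : ℝ) {l : ℝ} (hl : 0 < l)
    (hl1 : l ≤ 1) {δ : ℝ} (hδ : 0 < δ) :
    ENNReal.ofReal (1 - δ) ≤ trainM D n {S | ∀ w, w ⬝ᵥ w ≤ 1 →
      |∫ p, (kLossD D γ (hRound p.1 p.2 w) p.1 - kLossS S γ (hRound p.1 p.2 w) p.1)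
          ∂roundMeasure k m| ≤
        l * ∫ p, kLossD D γ (hRound p.1 p.2 w) p.1 ∂roundMeasure k m +
          (Real.log (2 * intExpMeasure.real Set.univ ^ k / δ) + 13 * k) / (l * n)} := by
  have hmass := zero_lt_one.trans_le one_le_intExpMeasure_real_univ
  have hevent := measurableSet_mem_marginEvent (k := k) (m := m) γ
    (measurable_gridPt.comp measurable_snd) measurable_fst
  have hpac := pac_bayes D (P := roundMeasure k m) (ν := codePrior k m)
    (E := fun u => marginEvent γ (gridPt k u.2) u.1) hevent hn
    (by rw [codePrior_real_univ]; positivity) hl hl1 hδ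
  refine hpac.trans (measure_mono fun S hS w hw => ?_)
  have hdev := hS (roundingCode w) (codePenalty w) (measurable_roundingCode w)
    (integrable_codePenalty w) (map_roundingCode_withDensity_le hk w)
  simp only [gridPt_roundingCode, codePrior_real_univ] at hdev
  refine hdev.trans (add_le_add_right ?_ _)
  gcongr
  exact integral_codePenalty_le hk hw

theorem log_two_mul_pow_div_add_le {C : ℝ} (hC : 1 ≤ C) (k : ℕ) {δ : ℝ} (hδ : 0 < δ)
    (hδ1 : δ ≤ 1) :
    Real.log (2 * C ^ k / δ) + 13 * k ≤
      (14 + Real.log C) * (k + Real.log (Real.exp 1 / δ)) := by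
  have hlogδ : Real.log δ ≤ 0 := Real.log_nonpos hδ.le hδ1
  have hlogC : 0 ≤ Real.log C := Real.log_nonneg hC
  rw [Real.log_div (by positivity) hδ.ne', Real.log_mul two_ne_zero (by positivity), Real.log_pow,
    Real.log_div (Real.exp_pos 1).ne' hδ.ne', Real.log_exp]
  nlinarith only [Real.log_two_lt_d9, hlogδ, k.cast_nonneg (α := ℝ),
    mul_nonneg hlogC (by linarith : 0 ≤ 1 - Real.log δ)]

theorem statement7_general : ∃ c : ℝ, 0 < c ∧
    ∀ (m n k : ℕ), 1 ≤ n → 1 ≤ k →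
    ∀ D : Measure ((Fin m → ℝ) × ℝ), IsProbabilityMeasure D →
    (∀ᵐ q ∂D, (q.2 • q.1) ⬝ᵥ (q.2 • q.1) ≤ 1) →
    ∀ γ γ' : ℝ, 0 < γ → γ ≤ 1 → 0 ≤ γ' → γ' ≤ 2 * γ → ∀ ℓ : ℝ, 0 ≤ ℓ →
    ∀ δ : ℝ, 0 < δ → δ < 1 →
    ENNReal.ofReal (1 - δ) ≤ trainM D n {S |
      ∀ w, w ⬝ᵥ w ≤ 1 → lossD D (3 / 4 * γ) w ≤ ℓ →
      |∫ p, (kLossD D (γ / 2) (hRound p.1 p.2 w) p.1 -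
          kLossS S (γ / 2) (hRound p.1 p.2 w) p.1) ∂roundMeasure k m| ≤
        c * (√((ℓ + Real.exp (-(γ' ^ 2) * k / c)) *
              ((k : ℝ) + Real.log (Real.exp 1 / δ)) / n) +
            ((k : ℝ) + Real.log (Real.exp 1 / δ)) / n)} := by
  have hC := one_le_intExpMeasure_real_univ
  set C := intExpMeasure.real Set.univ
  have hlogC : 0 ≤ Real.log C := Real.log_nonneg hC
  set c := 400 + Real.log C
  refine ⟨c, by positivity, fun m n k hn hk D _ hD γ γ' hγ hγ1 hγ'0 hγ' ℓ hℓ δ hδ hδ1 => ?_⟩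
  set B := (k : ℝ) + Real.log (Real.exp 1 / δ)
  have hB : 0 < B := add_pos_of_nonneg_of_pos k.cast_nonneg <| Real.log_pos <| by
    rw [one_lt_div hδ]
    exact hδ1.trans (Real.one_lt_exp_iff.2 one_pos)
  set V := ℓ + Real.exp (-(γ' ^ 2) * k / c)
  have hexp : -(γ ^ 2 * k / 100) ≤ -(γ' ^ 2) * k / c := by
    rw [neg_mul, neg_div, neg_le_neg_iff, div_le_div_iff₀ (by positivity) (by norm_num)]
    calc γ' ^ 2 * k * 100 ≤ (2 * γ) ^ 2 * k * 100 := by gcongr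
      _ = γ ^ 2 * k * 400 := by ring
      _ ≤ γ ^ 2 * k * c := by gcongr; linarith
  obtain ⟨l, hl, hl1, hscale⟩ := exists_scale_mul_add_div_le (V := V) (K := 14 + Real.log C)
    (by positivity) hB (Nat.cast_pos.2 hn) (by positivity)
  refine (ofReal_one_sub_le_trainM_forall_hRound_deviation_le hk hn D (γ / 2) hl hl1 hδ).trans
    (measure_mono fun S hS w hw hwℓ => ?_)
  have hmean : ∫ p, kLossD D (γ / 2) (hRound p.1 p.2 w) p.1 ∂roundMeasure k m ≤ V :=
    (integral_kLossD_hRound_le hk D hD hw hγ hγ1).trans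
      (add_le_add hwℓ (Real.exp_le_exp.2 hexp))
  calc _ ≤ _ := hS w hw
    _ ≤ l * V + (14 + Real.log C) * B / (l * n) := by
      gcongr
      exact log_two_mul_pow_div_add_le hC k hδ hδ1.le
    _ ≤ (14 + Real.log C + 1) * (√(V * B / n) + B / n) := hscale
    _ ≤ c * (√(V * B / n) + B / n) := by gcongr; linarith

end Generalization

section ReducedSetup

variable {n i : ℕ}

theorem γlo_pos (hn : 1 ≤ n) (i : ℕ) : 0 < γlo n i := by
  have : (0 : ℝ) < n := Nat.cast_pos.2 hn
  unfold γlo; positivity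

theorem γhi_eq_two_mul_γlo (hi : 1 ≤ i) : γhi n i = 2 * γlo n i := by
  obtain ⟨i, rfl⟩ := Nat.exists_eq_add_of_le' hi
  rw [γhi, γlo, Nat.add_sub_cancel, pow_succ', mul_div_assoc]

theorem γlo_le_of_two_pow_le {a : ℝ} (hn : 1 ≤ n) (hi : 1 ≤ i) (hin : (2 : ℝ) ^ i ≤ a * √n) :
    γlo n i ≤ a := by
  have hsqrt : 0 < √(n : ℝ) := Real.sqrt_pos.2 (Nat.cast_pos.2 hn)
  have hγhi : γhi n i ≤ a := (div_le_iff₀ hsqrt).2 hin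
  linarith [γhi_eq_two_mul_γlo (n := n) hi, γlo_pos hn i]

theorem ellhi_nonneg (n j : ℕ) : 0 ≤ ellhi n j := by
  unfold ellhi; positivity

theorem le_ellhi_of_mem_Lset {j : ℕ} {x : ℝ} (hx : x ∈ Lset n j) : x ≤ ellhi n j := by
  unfold Lset at hx
  unfold ellhi
  split_ifs at hx with hj
  · subst hj; simpa using hx.2
  · exact hx.2

theorem dotProduct_self_of_mem_Hset {d : ℕ} {w : Fin (d + 1) → ℝ} (hw : w ∈ Hset d) :
    w ⬝ᵥ w = 1 := by
  simpa only [dotProduct, ← sq] using hw.1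

theorem ae_dotProduct_self_le_one {d : ℕ} {cγ : ℝ} (D : Measure ((Fin (d + 1) → ℝ) × ℝ))
    [IsProbabilityMeasure D] (hD : D {p | p.1 ∈ Xset d cγ ∧ (p.2 = 1 ∨ p.2 = -1)} = 1) :
    ∀ᵐ q ∂D, (q.2 • q.1) ⬝ᵥ (q.2 • q.1) ≤ 1 := by
  have hmeas : MeasurableSet {q : (Fin (d + 1) → ℝ) × ℝ | (q.2 • q.1) ⬝ᵥ (q.2 • q.1) ≤ 1} :=
    measurableSet_le (by unfold dotProduct; fun_prop) measurable_const
  refine (mem_ae_iff_prob_eq_one hmeas).2 <| le_antisymm prob_le_one <|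
    hD.symm.trans_le <| measure_mono ?_
  rintro ⟨x, y⟩ ⟨⟨hx, -⟩, rfl | rfl⟩ <;> simp [dotProduct, ← sq, hx]

end ReducedSetup

/-- (Lemma 3.6, "meet in the middle" bound.) With probability `1 - δ`
over the sample, for every `w ∈ H(Γ_i, L_j)` the expected (over the randomized rounding)
gap between the transformed distributional and empirical margin losses at margin `γ_i/2`
is small. -/
theorem statement7 : ∃ cγ c : ℝ, 0 < cγ ∧ cγ ≤ (Real.sqrt 2)⁻¹ ∧ 0 < c ∧
    ∀ (d n k : ℕ), 1 ≤ n → Even k → 4 ≤ k →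
    ∀ i j : ℕ, 1 ≤ i → (2 : ℝ) ^ i ≤ cγ * Real.sqrt n → (2 : ℝ) ^ j ≤ (n : ℝ) →
    ∀ D : Measure ((Fin (d+1) → ℝ) × ℝ), IsProbabilityMeasure D →
    D {p | p.1 ∈ Xset d cγ ∧ (p.2 = 1 ∨ p.2 = -1)} = 1 →
    ∀ δ : ℝ, 0 < δ → δ < 1 →
    ENNReal.ofReal (1 - δ) ≤ trainM D n {S |
      ∀ w, w ∈ Hset d → lossD D (3 / 4 * γlo n i) w ∈ Lset n j →
      |∫ p, (kLossD D (γlo n i / 2) (hRound p.1 p.2 w) p.1 -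
          kLossS S (γlo n i / 2) (hRound p.1 p.2 w) p.1) ∂(roundMeasure k (d+1))| ≤
        c * (Real.sqrt ((ellhi n j + Real.exp (-(γhi n i ^ 2) * k / c)) *
              ((k : ℝ) + Real.log (Real.exp 1 / δ)) / n) +
            ((k : ℝ) + Real.log (Real.exp 1 / δ)) / n)} := by
  obtain ⟨c, hc, hbound⟩ := statement7_general
  refine ⟨(√2)⁻¹, c, by positivity, le_rfl, hc, ?_⟩
  intro d n k hn _ hk i j hi hin _ D _ hD δ hδ hδ1
  have hγ : γlo n i ≤ 1 := (γlo_le_of_two_pow_le hn hi hin).trans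
    (inv_le_one_of_one_le₀ (Real.one_le_sqrt.2 one_le_two))
  exact (hbound (d + 1) n k hn (by lia) D ‹_› (ae_dotProduct_self_le_one D hD) (γlo n i) (γhi n i)
    (γlo_pos hn i) hγ (by unfold γhi; positivity) (γhi_eq_two_mul_γlo hi).le (ellhi n j)
    (ellhi_nonneg n j) δ hδ hδ1).trans <| measure_mono fun S hS w hw hwL =>
      hS w (dotProduct_self_of_mem_Hset hw).le (le_ellhi_of_mem_Lset hwL)
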